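/- arXiv:2506.17605 — 2 statements merged into one kernel-verified Lean document; each statement's English description precedes it below -/
import Mathlib

section
/- Let γ ∈ ℤ[i] be squarefree (in particular nonzero), and let E_{γ²} be the elliptic curve over ℚ(i) given by y² = x³ + γ²x. Then the torsion subgroup of E_{γ²}(ℚ(i)) is isomorphic to ℤ/2ℤ ⊕ ℤ/4ℤ if γ = i or γ = −i, and is isomorphic to ℤ/2ℤ ⊕ ℤ/2ℤ otherwise. -/
noncomputable section

open WeierstrassCurve
open scoped IntermediateField

/-- The field `ℚ(i)`, realized as the subfield of `ℂ` generated by `Complex.I` over `ℚ`. -/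
abbrev QI : IntermediateField ℚ ℂ := ℚ⟮Complex.I⟯

/-- The imaginary unit `i` as an element of `ℚ(i)`. -/
def QIi : QI := ⟨Complex.I, IntermediateField.mem_adjoin_simple_self ℚ Complex.I⟩

/-- The imaginary unit `i` as a Gaussian integer, so `ℤ[i] = ℤ + ℤ·gi`. -/
def gi : GaussianInt := ⟨0, 1⟩

/-- The canonical embedding `ℤ[i] → ℚ(i)`, sending `a + b·i` to `a + b·i`. -/
def toQI (z : GaussianInt) : QI := (z.re : QI) + (z.im : QI) * QIi

/-- The (Weierstrass model of the) elliptic curve `Eα : y² = x³ + α x` over `ℚ(i)`. -/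
def Ecurve (α : QI) : WeierstrassCurve QI := ⟨0, 0, 0, α, 0⟩

/-- A Gaussian prime congruent to `-1 - 6i` modulo `16`. -/
def GoodPrime (π : GaussianInt) : Prop :=
  Prime π ∧ (16 : GaussianInt) ∣ (π - (-1 - 6 * gi))
lemma QIi_sq : QIi * QIi = -1 := by
  apply Subtype.ext
  simp [QIi]

/-- `toQI` as a ring homomorphism. -/
def toQIHom : GaussianInt →+* QI := Zsqrtd.lift ⟨QIi, by rw [QIi_sq]; simp⟩

lemma toQI_eq (z : GaussianInt) : toQI z = toQIHom z := rfl

lemma toQIHom_inj : Function.Injective toQIHom := by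
  apply Zsqrtd.lift_injective
  intro n h
  nlinarith [mul_self_nonneg n]

lemma toQIHom_ne {z : GaussianInt} (h : z ≠ 0) : toQIHom z ≠ 0 :=
  (map_ne_zero_iff _ toQIHom_inj).2 h

lemma toQIHom_gi : toQIHom gi = QIi := by
  simp [toQIHom, gi]

lemma gi_sq : gi * gi = -1 := by
  ext <;> simp [gi]

lemma exists_rat_rep (u : QI) : ∃ p q : ℚ, (u : ℂ) = p + q * Complex.I := by
  obtain ⟨u, hu⟩ := u
  induction hu using IntermediateField.adjoin_induction with
  | mem x hx => exact ⟨0, 1, by simpa using hx⟩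
  | algebraMap x => exact ⟨x, 0, by simp⟩
  | add x y hx hy h1 h2 =>
    obtain ⟨p, q, h1⟩ := h1
    obtain ⟨r, s, h2⟩ := h2
    refine ⟨p + r, q + s, ?_⟩
    simp only at h1 h2 ⊢
    rw [h1, h2]; push_cast; ring
  | mul x y hx hy h1 h2 =>
    obtain ⟨p, q, h1⟩ := h1
    obtain ⟨r, s, h2⟩ := h2
    refine ⟨p * r - q * s, p * s + q * r, ?_⟩
    simp only at h1 h2 ⊢
    rw [h1, h2]; push_cast; linear_combination (q * s : ℂ) * Complex.I_sq
  | inv x hx h1 =>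
    obtain ⟨p, q, h1⟩ := h1
    refine ⟨p / (p ^ 2 + q ^ 2), - q / (p ^ 2 + q ^ 2), ?_⟩
    simp only at h1 ⊢
    rw [h1]
    by_cases h0 : p ^ 2 + q ^ 2 = 0
    · have hp : p = 0 := by nlinarith [sq_nonneg p, sq_nonneg q]
      have hq : q = 0 := by nlinarith [sq_nonneg p, sq_nonneg q]
      simp [hp, hq]
    · have h0' : (p : ℂ) ^ 2 + (q : ℂ) ^ 2 ≠ 0 := by exact_mod_cast h0
      apply inv_eq_of_mul_eq_one_right
      push_cast
      field_simp
      linear_combination - (q : ℂ) ^ 2 * Complex.I_sq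

lemma exists_frac (u : QI) : ∃ a b : GaussianInt, IsCoprime a b ∧ b ≠ 0 ∧
    u * toQIHom b = toQIHom a := by
  obtain ⟨p, q, h⟩ := exists_rat_rep u
  have hu : u = (p : QI) + (q : QI) * QIi := by
    apply Subtype.ext
    rw [h]; simp [QIi]
  let A : GaussianInt := ⟨p.num * q.den, q.num * p.den⟩
  let B : GaussianInt := ⟨p.den * q.den, 0⟩
  have hB : B ≠ 0 := by
    intro h
    have := congrArg Zsqrtd.re h
    simp [B] at this
  have hAB : u * toQIHom B = toQIHom A := by
    have hp : (p : QI) * (p.den : QI) = p.num := by exact_mod_cast Rat.mul_den_eq_num p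
    have hq : (q : QI) * (q.den : QI) = q.num := by exact_mod_cast Rat.mul_den_eq_num q
    simp only [toQIHom, Zsqrtd.lift_apply_apply, A, B, hu]
    push_cast
    rw [← hp, ← hq]
    ring
  obtain ⟨a, ha⟩ := EuclideanDomain.gcd_dvd_left A B
  obtain ⟨b, hb⟩ := EuclideanDomain.gcd_dvd_right A B
  have hg := EuclideanDomain.gcd_eq_gcd_ab A B
  set g := EuclideanDomain.gcd A B
  have hg0 : g ≠ 0 := by
    rintro h0
    rw [h0, zero_mul] at hb
    exact hB hb
  refine ⟨a, b, ⟨EuclideanDomain.gcdA A B, EuclideanDomain.gcdB A B, ?_⟩, ?_, ?_⟩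
  · apply mul_left_cancel₀ hg0
    linear_combination -hg - EuclideanDomain.gcdA A B * ha - EuclideanDomain.gcdB A B * hb
  · rintro rfl
    exact hB (by simpa using hb)
  · apply mul_left_cancel₀ (toQIHom_ne hg0)
    rw [ha, hb, map_mul, map_mul] at hAB
    linear_combination hAB

/-- reduction modulo `1 + i`. -/
def par : GaussianInt →+* ZMod 2 := Zsqrtd.lift ⟨1, by decide⟩

lemma par_gi : par gi = 1 := by simp [par, gi]

/-- the prime above two. -/
def pg : GaussianInt := ⟨1, 1⟩

lemma par_pg : par pg = 0 := by simp [par, pg]; decide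

lemma pg_eq : pg = 1 + gi := by ext <;> simp [pg, gi]

lemma par_cases (a : GaussianInt) : par a = 0 ∨ par a = 1 := by
  generalize par a = x
  revert x; decide

lemma pg_dvd {a : GaussianInt} (h : par a = 0) : pg ∣ a := by
  have h2 : ((a.re + a.im : ℤ) : ZMod 2) = 0 := by
    simpa [par] using h
  rw [ZMod.intCast_zmod_eq_zero_iff_dvd] at h2
  obtain ⟨k, hk⟩ := h2
  refine ⟨⟨k, a.im - k⟩, ?_⟩
  ext <;> simp [pg]
  push_cast at hk
  linarith

lemma odd_ne {a : GaussianInt} (h : par a = 1) : a ≠ 0 := by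
  rintro rfl
  simp at h

lemma pg_coprime {a : GaussianInt} (h : par a = 1) : IsCoprime pg a := by
  obtain ⟨c, hc⟩ := pg_dvd (a := a - 1) (by simp [h])
  exact ⟨-c, 1, by linear_combination hc⟩

lemma not_all_pow_dvd {b : GaussianInt} (hb : b ≠ 0) : ∃ n, ¬ pg ^ n ∣ b := by
  have : FiniteMultiplicity pg b := by
    apply FiniteMultiplicity.of_not_isUnit _ hb
    intro h
    have := h.map par
    rw [par_pg] at this
    simp at this
  obtain ⟨n, hn⟩ := this
  exact ⟨_, hn⟩

lemma odd_mod_two {a b : GaussianInt} (ha : par a = 1) (hb : par b = 1) :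
    (∃ c, a = b + 2 * c) ∨ (∃ c, a = gi * b + 2 * c) := by
  obtain ⟨c, hc⟩ := pg_dvd (a := a - b) (by simp [ha, hb])
  have h2 : (2 : GaussianInt) = pg * (1 - gi) := by rw [pg_eq]; linear_combination gi_sq
  rcases par_cases c with h | h
  · left
    obtain ⟨d, hd⟩ := pg_dvd h
    refine ⟨gi * d, ?_⟩
    rw [pg_eq] at *
    linear_combination hc + (1 + gi) * hd + d * gi_sq
  · right
    obtain ⟨d, hd⟩ := pg_dvd (a := c - gi * b) (by simp [h, hb, par_gi])
    refine ⟨gi * d, ?_⟩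
    rw [pg_eq] at *
    linear_combination hc + (1 + gi) * hd + (d + b) * gi_sq

/-- `u = a / b` with `a` odd and `b` divisible by `(1+i)^n`. -/
def Esc (n : ℕ) (u : QI) : Prop :=
  ∃ a b : GaussianInt, par a = 1 ∧ b ≠ 0 ∧ pg ^ n ∣ b ∧ u * toQIHom b = toQIHom a

lemma Esc.bound {u : QI} : ∃ N, ∀ n, Esc n u → n < N := by
  obtain ⟨a, b, -, hb, h⟩ := exists_frac u
  obtain ⟨N, hN⟩ := not_all_pow_dvd hb
  refine ⟨N, ?_⟩
  rintro n ⟨a', b', ha', hb', hd, h'⟩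
  by_contra hlt
  apply hN
  have hd' : pg ^ N ∣ b' := (pow_dvd_pow _ (not_lt.1 hlt)).trans hd
  have key : a' * b = a * b' := by
    apply toQIHom_inj
    rw [map_mul, map_mul, ← h, ← h']; ring
  refine ((pg_coprime ha').pow_left (m := N)).dvd_of_dvd_mul_left ?_
  rw [key]
  exact hd'.mul_left a

lemma two_par : par 2 = 0 := by
  rw [map_ofNat]; decide

/-- The doubling map in projective form; `(a:b) ↦ ((a²-b²)² : 4ab(a²+b²))`. -/
def IsDbl (u v : QI) : Prop := v * (4 * u * (u ^ 2 + 1)) = (u ^ 2 - 1) ^ 2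

lemma IsDbl.frac {u v : QI} (h : IsDbl u v) {a b : GaussianInt}
    (hab : u * toQIHom b = toQIHom a) :
    v * toQIHom (4 * a * b * (a ^ 2 + b ^ 2)) = toQIHom ((a ^ 2 - b ^ 2) ^ 2) := by
  unfold IsDbl at h
  simp only [map_mul, map_add, map_sub, map_pow, map_ofNat, ← hab]
  linear_combination (toQIHom b) ^ 4 * h

lemma Esc.step {n : ℕ} {u v : QI} (hn : 1 ≤ n) (hu : Esc n u) (h : IsDbl u v) : Esc (n + 1) v := by
  obtain ⟨a, b, ha, hb, hd, hab⟩ := hu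
  have hb0 : par b = 0 := by
    obtain ⟨c, rfl⟩ := hd
    rw [map_mul, map_pow, par_pg, zero_pow (by omega), zero_mul]
  have h1 : par (a ^ 2 + b ^ 2) = 1 := by simp [ha, hb0]
  refine ⟨_, _, ?_, ?_, ?_, h.frac hab⟩
  · simp [ha, hb0]
  · exact mul_ne_zero (mul_ne_zero (mul_ne_zero (by decide) (odd_ne ha)) hb) (odd_ne h1)
  · have : pg ∣ (4 : GaussianInt) := pg_dvd (by rw [map_ofNat]; decide)
    rw [pow_succ]
    have := mul_dvd_mul hd this
    refine this.trans ⟨a * (a ^ 2 + b ^ 2), by ring⟩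

lemma Esc.first {u v : QI} (h : IsDbl u v) (hu : u ≠ 0) {a b : GaussianInt}
    (ha : par a = 0) (hb : par b = 1) (hab : u * toQIHom b = toQIHom a) : Esc 1 v := by
  have ha0 : a ≠ 0 := by
    rintro rfl
    rw [map_zero] at hab
    exact mul_ne_zero hu (toQIHom_ne (odd_ne hb)) hab
  have h1 : par (a ^ 2 + b ^ 2) = 1 := by simp [ha, hb]
  refine ⟨_, _, ?_, ?_, ?_, h.frac hab⟩
  · simp [ha, hb]
  · exact mul_ne_zero (mul_ne_zero (mul_ne_zero (by decide) ha0) (odd_ne hb)) (odd_ne h1)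
  · rw [pow_one]
    exact pg_dvd (by simp [ha])

lemma Esc.mono {m n : ℕ} (hmn : m ≤ n) {u : QI} (h : Esc n u) : Esc m u := by
  obtain ⟨a, b, h⟩ := h
  exact ⟨a, b, h.1, h.2.1, (pow_dvd_pow _ hmn).trans h.2.2.1, h.2.2.2⟩

/-- `u = a / b` with `a` even and `b` odd. -/
def Ev (u : QI) : Prop :=
  ∃ a b : GaussianInt, par a = 0 ∧ par b = 1 ∧ u * toQIHom b = toQIHom a

/-- either a point is special, or its double escapes or is even. -/
lemma escape (u v : QI) (h0 : u ≠ 0) (h1 : u ^ 2 + 1 ≠ 0)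
    (huv : IsDbl u v) : Esc 1 v ∨ Ev v := by
  obtain ⟨a, b, ⟨r, s, hrs⟩, hb, hab⟩ := exists_frac u
  rcases par_cases a with pa | pa <;> rcases par_cases b with pb | pb
  · exfalso
    have := congrArg par hrs
    simp [pa, pb] at this
  · exact Or.inl (Esc.first huv h0 pa pb hab)
  · have : Esc 1 u := ⟨a, b, pa, hb, by rw [pow_one]; exact pg_dvd pb, hab⟩
    exact Or.inl ((this.step le_rfl huv).mono (by norm_num))
  · have hf := huv.frac hab
    rcases odd_mod_two pa pb with ⟨c, hc⟩ | ⟨c, hc⟩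
    · -- `v = 2 c² (c+b)² / odd`
      refine Or.inr ⟨2 * (c * (c + b)) ^ 2, a * b * (b ^ 2 + 2 * b * c + 2 * c ^ 2),
        by simp [two_par], by simp [pa, pb, two_par], ?_⟩
      apply mul_left_cancel₀ (toQIHom_ne (z := 8) (by decide))
      have e1 : 4 * a * b * (a ^ 2 + b ^ 2)
          = 8 * (a * b * (b ^ 2 + 2 * b * c + 2 * c ^ 2)) := by
        rw [hc]; ring
      have e2 : (a ^ 2 - b ^ 2) ^ 2 = 8 * (2 * (c * (c + b)) ^ 2) := by
        rw [hc]; ring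
      rw [e1, e2, map_mul _ 8, map_mul _ 8] at hf
      linear_combination hf
    · have hne : c * (c + gi * b) ≠ 0 := by
        intro h
        apply h1
        have : a ^ 2 + b ^ 2 = 0 := by
          rw [hc]; linear_combination b ^ 2 * gi_sq + 4 * h
        have := congrArg toQIHom this
        simp only [map_add, map_pow, ← hab, map_zero] at this
        have hb' := toQIHom_ne hb
        apply mul_left_cancel₀ (pow_ne_zero 2 hb')
        linear_combination this
      have : Esc 1 v := by
        refine ⟨(-b ^ 2 + 2 * gi * b * c + 2 * c ^ 2) ^ 2, 4 * a * b * (c * (c + gi * b)), ?_, ?_,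
          ?_, ?_⟩
        · simp [pb, two_par]
        · exact mul_ne_zero (mul_ne_zero (mul_ne_zero (by decide) (odd_ne pa)) hb) hne
        · rw [pow_one]
          apply pg_dvd
          have : par 4 = 0 := by rw [map_ofNat]; decide
          simp [this]
        · apply mul_left_cancel₀ (toQIHom_ne (z := 4) (by decide))
          have e1 : 4 * a * b * (a ^ 2 + b ^ 2) = 4 * (4 * a * b * (c * (c + gi * b))) := by
            have : a ^ 2 + b ^ 2 = 4 * (c * (c + gi * b)) := by
              rw [hc]; linear_combination b ^ 2 * gi_sq
            rw [this]; ring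
          have e2 : (a ^ 2 - b ^ 2) ^ 2 = 4 * ((-b ^ 2 + 2 * gi * b * c + 2 * c ^ 2) ^ 2) := by
            have : a ^ 2 - b ^ 2 = 2 * (-b ^ 2 + 2 * gi * b * c + 2 * c ^ 2) := by
              rw [hc]; linear_combination b ^ 2 * gi_sq
            rw [this]; ring
          rw [e1, e2, map_mul _ 4, map_mul _ 4] at hf
          linear_combination hf
      exact Or.inl this

lemma escape_two {v : QI} (hv : v ≠ 0) (h : Esc 1 v ∨ Ev v) :
    v ^ 2 + 1 ≠ 0 ∧ ∀ w, IsDbl v w → Esc 1 w := by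
  constructor
  · intro h0
    obtain ⟨a, b, hab, e⟩ : ∃ a b : GaussianInt, par (a ^ 2 + b ^ 2) = 1 ∧
        v * toQIHom b = toQIHom a := by
      rcases h with ⟨a, b, ha, -, hd, e⟩ | ⟨a, b, ha, hb, e⟩
      · refine ⟨a, b, ?_, e⟩
        obtain ⟨c, rfl⟩ := hd
        simp [ha, par_pg]
      · exact ⟨a, b, by simp [ha, hb], e⟩
    apply toQIHom_ne (odd_ne hab)
    rw [map_add, map_pow, map_pow, ← e]
    linear_combination toQIHom b ^ 2 * h0
  · intro w hw
    rcases h with h | ⟨a, b, ha, hb, e⟩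
    · exact (h.step le_rfl hw).mono (by norm_num)
    · exact Esc.first hw hv ha hb e

/-- if `2γ³` is a square then `γ = ± i`. -/
lemma gamma_of_sq {γ : GaussianInt} (hγ : Squarefree γ) {y : QI}
    (hy : y ^ 2 = 2 * toQIHom γ ^ 3) : γ = gi ∨ γ = -gi := by
  have hγ0 : toQIHom γ ≠ 0 := toQIHom_ne hγ.ne_zero
  have hpg : toQIHom pg ≠ 0 := toQIHom_ne (by decide)
  have hpg2 : toQIHom pg ^ 2 = 2 * QIi := by
    rw [← map_pow, pg_eq, ← toQIHom_gi]
    have : (1 + gi) ^ 2 = 2 * gi := by linear_combination gi_sq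
    rw [this, map_mul, map_ofNat]
  obtain ⟨a, b, ⟨r, s, hrs⟩, hb, hab⟩ := exists_frac (y / (toQIHom pg * toQIHom γ))
  have hs : (y / (toQIHom pg * toQIHom γ)) ^ 2 = toQIHom (-gi * γ) := by
    rw [div_pow, mul_pow, hpg2, hy, map_mul, map_neg, toQIHom_gi]
    have : QIi ≠ 0 := by
      intro h; have := QIi_sq; simp [h] at this
    field_simp
    linear_combination QIi_sq
  have e : a ^ 2 = -gi * γ * b ^ 2 := by
    apply toQIHom_inj
    rw [map_pow, ← hab, mul_pow, hs, map_mul _ _ (b ^ 2), map_pow]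
  have hbu : IsUnit b := by
    have hc : IsCoprime (a ^ 2) b := IsCoprime.pow_left ⟨r, s, hrs⟩
    apply hc.isUnit_of_dvd' _ dvd_rfl
    rw [e]
    exact Dvd.intro_left (-gi * γ * b) (by ring)
  obtain ⟨b', hb'⟩ := hbu.exists_right_inv
  have e2 : γ = gi * (a * b') ^ 2 := by
    have : (a * b') ^ 2 = -gi * γ := by
      rw [mul_pow, e]
      linear_combination (-gi * γ) * (b * b' + 1) * hb'
    rw [this]; linear_combination γ * gi_sq
  have hw : IsUnit (a * b') := hγ _ ⟨gi, by rw [e2]; ring⟩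
  generalize a * b' = w at *
  have hn := (Zsqrtd.norm_eq_one_iff' (by norm_num) w).2 hw
  rw [Zsqrtd.norm_def] at hn
  have h1 : w.re ^ 2 + w.im ^ 2 = 1 := by linarith
  have hw2 : w ^ 2 = 1 ∨ w ^ 2 = -1 := by
    have a1 : w.re ≤ 1 := by nlinarith
    have a2 : -1 ≤ w.re := by nlinarith
    have a3 : w.im ≤ 1 := by nlinarith
    have a4 : -1 ≤ w.im := by nlinarith
    obtain ⟨x, y⟩ := w
    simp only at *
    interval_cases x <;> interval_cases y <;> first | (exfalso; omega) | decide
  rcases hw2 with h | h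
  · left; rw [e2, h, mul_one]
  · right; rw [e2, h, mul_neg_one]

lemma ns_iff {A x y : QI} : (Ecurve A).toAffine.Nonsingular x y ↔
    y ^ 2 = x ^ 3 + A * x ∧ (3 * x ^ 2 + A ≠ 0 ∨ 2 * y ≠ 0) := by
  rw [Affine.nonsingular_iff', Affine.equation_iff]
  simp only [Ecurve]
  refine and_congr (by simp) (or_congr ?_ (by simp))
  rw [← neg_ne_zero]
  simp

lemma negY_eq {A x y : QI} : (Ecurve A).toAffine.negY x y = -y := by
  simp [Affine.negY, Ecurve]

lemma ne_neg_self {y : QI} (hy : y ≠ 0) : y ≠ -y := by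
  intro h
  apply hy
  have h2 : (2 : QI) * y = 0 := by linear_combination h
  exact (mul_eq_zero.1 h2).resolve_left two_ne_zero

lemma dbl {A x y : QI} (h : (Ecurve A).toAffine.Nonsingular x y) (hy : y ≠ 0) :
    ∃ x' y' h', (Affine.Point.some x y h + Affine.Point.some x y h : (Ecurve A).toAffine.Point)
      = Affine.Point.some x' y' h' ∧ x' * (4 * y ^ 2) = (x ^ 2 - A) ^ 2 := by
  have hne : y ≠ (Ecurve A).toAffine.negY x y := by
    rw [negY_eq]; exact ne_neg_self hy
  refine ⟨_, _, _, Affine.Point.add_self_of_Y_ne hne, ?_⟩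
  rw [Affine.slope_of_Y_ne rfl hne, negY_eq]
  have he := (ns_iff.1 h).1
  simp only [Affine.addX, Ecurve]
  have h2 : y - -y = 2 * y := by ring
  rw [h2]
  field_simp
  linear_combination (-32 * x) * he

lemma dbl_zero {A x : QI} (h : (Ecurve A).toAffine.Nonsingular x 0) :
    (Affine.Point.some x 0 h + Affine.Point.some x 0 h : (Ecurve A).toAffine.Point) = 0 :=
  Affine.Point.add_self_of_Y_eq (by rw [negY_eq, neg_zero])

/-- A point all of whose rescaled `x`-coordinate escapes. -/
def PEsc {A : QI} (g : QI) (n : ℕ) (P : (Ecurve A).toAffine.Point) : Prop :=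
  ∃ x y h, P = Affine.Point.some x y h ∧ Esc n (x / g)

lemma isDbl_of {g x y x' : QI} (hg : g ≠ 0) (h : y ^ 2 = x ^ 3 + g ^ 2 * x)
    (h' : x' * (4 * y ^ 2) = (x ^ 2 - g ^ 2) ^ 2) : IsDbl (x / g) (x' / g) := by
  unfold IsDbl
  rw [h] at h'
  field_simp
  linear_combination h'

lemma Esc.y_ne {g x y : QI} {n : ℕ} (hn : 1 ≤ n) (hg : g ≠ 0) (h : y ^ 2 = x ^ 3 + g ^ 2 * x)
    (hE : Esc n (x / g)) : y ≠ 0 := by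
  rintro rfl
  obtain ⟨a, b, ha, hb, hd, hab⟩ := hE
  have hb0 : par b = 0 := by
    obtain ⟨c, rfl⟩ := hd
    rw [map_mul, map_pow, par_pg, zero_pow (by omega), zero_mul]
  have h1 : par (a ^ 2 + b ^ 2) = 1 := by simp [ha, hb0]
  have h2 : toQIHom (a * (a ^ 2 + b ^ 2)) = 0 := by
    rw [map_mul, map_add, map_pow, map_pow, ← hab]
    field_simp
    linear_combination -(toQIHom b ^ 3) * h
  exact toQIHom_ne (mul_ne_zero (odd_ne ha) (odd_ne h1)) h2

lemma PEsc.step {g : QI} (hg : g ≠ 0) {n : ℕ} (hn : 1 ≤ n)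
    {P : (Ecurve (g ^ 2)).toAffine.Point} (hP : PEsc g n P) : PEsc g (n + 1) (P + P) := by
  obtain ⟨x, y, h, rfl, hE⟩ := hP
  have he := (ns_iff.1 h).1
  obtain ⟨x', y', h', e, hx⟩ := dbl h (hE.y_ne hn hg he)
  exact ⟨x', y', h', e, hE.step hn (isDbl_of hg he hx)⟩

lemma PEsc.pow {g : QI} (hg : g ≠ 0)
    {P : (Ecurve (g ^ 2)).toAffine.Point} (hP : PEsc g 1 P) (k : ℕ) :
    PEsc g (k + 1) ((2 ^ k : ℕ) • P) := by
  induction k with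
  | zero => simpa using hP
  | succ k ih =>
    have := ih.step hg (by omega)
    rwa [← two_nsmul, ← mul_nsmul', mul_comm, ← pow_succ] at this

lemma PEsc.bound {g : QI} {P : (Ecurve (g ^ 2)).toAffine.Point} :
    ∃ N, ∀ n, PEsc g n P → n < N := by
  rcases P with _ | ⟨x, y, h⟩
  · refine ⟨0, ?_⟩
    rintro n ⟨x, y, h, e, -⟩
    cases e
  · obtain ⟨N, hN⟩ := Esc.bound (u := x / g)
    refine ⟨N, ?_⟩
    rintro n ⟨x', y', h', e, hE⟩
    cases e
    exact hN n hE

lemma PEsc.not_tors {g : QI} (hg : g ≠ 0)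
    {P : (Ecurve (g ^ 2)).toAffine.Point} (hP : PEsc g 1 P) : ¬ IsOfFinAddOrder P := by
  intro hf
  have : Finite (AddSubgroup.zmultiples P) := by
    exact hf.finite_zmultiples
  let f : ℕ → AddSubgroup.zmultiples P := fun k => ⟨(2 ^ k : ℕ) • P,
    AddSubgroup.nsmul_mem _ (AddSubgroup.mem_zmultiples P) _⟩
  obtain ⟨Q, hQ⟩ := Finite.exists_infinite_fiber f
  obtain ⟨N, hN⟩ := PEsc.bound (g := g) (P := (Q : (Ecurve (g ^ 2)).toAffine.Point))
  rw [Set.infinite_coe_iff] at hQ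
  obtain ⟨k, hk, hkN⟩ := hQ.exists_gt N
  have hk' : (2 ^ k : ℕ) • P = Q := congrArg Subtype.val hk
  have := hN _ (hk' ▸ hP.pow hg k)
  omega

/-- classification of torsion points -/
lemma tors_class {g : QI} (hg : g ≠ 0) {x y : QI}
    (h : (Ecurve (g ^ 2)).toAffine.Nonsingular x y)
    (ht : IsOfFinAddOrder (Affine.Point.some x y h : (Ecurve (g ^ 2)).toAffine.Point)) :
    y = 0 ∨ x ^ 2 = g ^ 2 := by
  by_contra! hc
  obtain ⟨hy, hx⟩ := hc
  have he := (ns_iff.1 h).1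
  obtain ⟨x', y', h', e, hx'⟩ := dbl h hy
  have he' := (ns_iff.1 h').1
  have hx0 : x ≠ 0 := by
    rintro rfl
    apply hy
    simpa using he
  have hx1 : x ^ 2 + g ^ 2 ≠ 0 := by
    intro h0
    apply hy
    have : y ^ 2 = 0 := by rw [he]; linear_combination x * h0
    simpa using this
  have hD := isDbl_of hg he hx'
  have a1 : x / g ≠ 0 := div_ne_zero hx0 hg
  have a2 : (x / g) ^ 2 + 1 ≠ 0 := by
    intro h0
    apply hx1
    field_simp at h0
    linear_combination h0
  have a3 : (x / g) ^ 2 - 1 ≠ 0 := by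
    intro h0
    apply hx
    field_simp at h0
    linear_combination h0
  have hv0 : x' / g ≠ 0 := by
    intro h0
    rw [h0] at hD
    unfold IsDbl at hD
    rw [zero_mul] at hD
    exact pow_ne_zero 2 a3 hD.symm
  obtain ⟨hv1, hv2⟩ := escape_two hv0 (escape _ _ a1 a2 hD)
  have hy' : y' ≠ 0 := by
    rintro rfl
    have h0 : x' * (x' ^ 2 + g ^ 2) = 0 := by linear_combination -he'
    rcases mul_eq_zero.1 h0 with h1 | h1
    · simp [h1] at hv0
    · apply hv1
      field_simp
      linear_combination h1
  obtain ⟨x'', y'', h'', e', hx''⟩ := dbl h' hy'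
  have hE := hv2 _ (isDbl_of hg he' hx'')
  have hP : PEsc g 1 (Affine.Point.some x'' y'' h'' : (Ecurve (g ^ 2)).toAffine.Point) :=
    ⟨_, _, _, rfl, hE⟩
  apply hP.not_tors hg
  rw [← e', ← e]
  exact (ht.add ht).add (ht.add ht)

lemma klein_of {G : Type*} [AddCommGroup G] (T : AddSubgroup G) (t0 t1 t2 : G)
    (n0 : t0 ≠ 0) (n1 : t1 ≠ 0) (n2 : t2 ≠ 0) (n01 : t0 ≠ t1) (n02 : t0 ≠ t2) (n12 : t1 ≠ t2)
    (d0 : t0 + t0 = 0) (d1 : t1 + t1 = 0) (d2 : t2 + t2 = 0)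
    (h : ∀ Q, Q ∈ T ↔ Q = 0 ∨ Q = t0 ∨ Q = t1 ∨ Q = t2) :
    Nonempty (T ≃+ ZMod 2 × ZMod 2) := by
  have hT : (T : Set G) = {0, t0, t1, t2} := by
    ext Q; simp [h]
  have : IsAddKleinFour T := by
    constructor
    · have : Nat.card T = Set.ncard (T : Set G) := rfl
      rw [this, hT, Set.ncard_insert_of_notMem, Set.ncard_insert_of_notMem, Set.ncard_pair n12]
      · simp [n01, n02]
      · simp [n0.symm, n1.symm, n2.symm]
    · have hd : AddMonoid.exponent T ∣ 2 := by
        apply AddMonoid.exponent_dvd_of_forall_nsmul_eq_zero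
        rintro ⟨Q, hQ⟩
        apply Subtype.ext
        rw [two_nsmul]
        rcases (h Q).1 hQ with rfl | rfl | rfl | rfl <;> simp [*]
      rcases (Nat.dvd_prime Nat.prime_two).1 hd with h1 | h1
      · exfalso
        have := AddMonoid.exponent_nsmul_eq_zero (⟨t0, (h t0).2 (by simp)⟩ : T)
        rw [h1, one_nsmul] at this
        exact n0 (congrArg Subtype.val this)
      · exact h1
  exact IsAddKleinFour.nonempty_addEquiv

lemma two_four_of {G : Type*} [AddCommGroup G] (T : AddSubgroup G) (t p : G)
    (d : t + t = 0) (nt : t ≠ 0) (np : p + p ≠ 0) (ntp : t ≠ p + p) (d4 : (p + p) + (p + p) = 0)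
    (ht : t ∈ T) (hp : p ∈ T)
    (h : ∀ Q ∈ T, ∃ a b : ℕ, Q = a • t + b • p) :
    Nonempty (T ≃+ ZMod 2 × ZMod 4) := by
  let f : ZMod 2 →+ G := ZMod.lift 2 ⟨zmultiplesHom G t, by simp [two_zsmul, d]⟩
  let g : ZMod 4 →+ G := ZMod.lift 4 ⟨zmultiplesHom G p, by
    simp only [zmultiplesHom_apply]
    rw [← d4]; push_cast; abel⟩
  have hf : ∀ n : ℕ, f (n : ZMod 2) = n • t := fun n => by
    have := ZMod.lift_coe 2 ⟨zmultiplesHom G t, by simp [two_zsmul, d]⟩ (n : ℤ)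
    simpa using this
  have hg : ∀ n : ℕ, g (n : ZMod 4) = n • p := fun n => by
    have := ZMod.lift_coe 4 ⟨zmultiplesHom G p, by
      simp only [zmultiplesHom_apply]
      rw [← d4]; push_cast; abel⟩ (n : ℤ)
    simpa using this
  let φ := f.coprod g
  have hφ : ∀ a b : ℕ, φ ((a : ZMod 2), (b : ZMod 4)) = a • t + b • p := fun a b => by
    simp [φ, hf, hg]
  have hinj : Function.Injective φ := by
    rw [injective_iff_map_eq_zero]
    rintro ⟨a, b⟩ hab
    rw [← ZMod.natCast_zmod_val a, ← ZMod.natCast_zmod_val b, hφ] at hab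
    have hb2 : (2 * b.val) • p = 0 := by
      have h2 := congrArg (fun z => 2 • z) hab
      simp only [smul_add, smul_zero, ← mul_nsmul'] at h2
      rw [mul_comm 2 a.val, mul_nsmul', two_nsmul t, d, smul_zero, zero_add] at h2
      exact h2
    have h3 : p + p + p + p = 0 := by rw [← d4]; abel
    fin_cases b
    · fin_cases a
      · rfl
      · exfalso; apply nt
        simpa [ZMod.val] using hab
    · exfalso; apply np
      simpa [ZMod.val, two_nsmul] using hb2
    · fin_cases a
      · exfalso; apply np
        simpa [ZMod.val, two_nsmul] using hab
      · exfalso; apply ntp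
        have e : t + (p + p) = 0 := by simpa [ZMod.val, two_nsmul] using hab
        rw [eq_neg_of_add_eq_zero_left e, neg_eq_iff_add_eq_zero]
        exact d4
    · exfalso; apply np
      have e : (6 : ℕ) • p = 0 := by simpa [ZMod.val] using hb2
      have e2 : p + p + (p + p + p + p) = 0 := by rw [← e]; abel
      rwa [h3, add_zero] at e2
  have hr : φ.range = T := by
    apply le_antisymm
    · rintro _ ⟨⟨a, b⟩, rfl⟩
      rw [← ZMod.natCast_zmod_val a, ← ZMod.natCast_zmod_val b, hφ]
      exact T.add_mem (T.nsmul_mem ht _) (T.nsmul_mem hp _)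
    · intro Q hQ
      obtain ⟨a, b, rfl⟩ := h Q hQ
      exact ⟨_, hφ a b⟩
  exact ⟨((AddMonoidHom.ofInjective hinj).trans (AddEquiv.addSubgroupCongr hr)).symm⟩

lemma mem_tors {A : QI} {P : (Ecurve A).toAffine.Point} :
    P ∈ AddCommGroup.torsion (Ecurve A).toAffine.Point ↔ IsOfFinAddOrder P := Iff.rfl

lemma fin_of_dbl {G : Type*} [AddCommGroup G] {P : G} (h : P + P = 0) : IsOfFinAddOrder P :=
  isOfFinAddOrder_iff_nsmul_eq_zero.2 ⟨2, by norm_num, by rw [two_nsmul, h]⟩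

lemma QIi_ne : QIi ≠ 0 := by
  intro h; have := QIi_sq; simp [h] at this

lemma ns_zero {g x : QI} (hg : g ≠ 0) (hx : x = 0 ∨ x = QIi * g ∨ x = -(QIi * g)) :
    (Ecurve (g ^ 2)).toAffine.Nonsingular x 0 := by
  have hi := QIi_sq
  rw [ns_iff]
  rcases hx with rfl | rfl | rfl
  · exact ⟨by ring, Or.inl (by simpa using hg)⟩
  · refine ⟨by linear_combination -(QIi * g ^ 3) * hi, Or.inl ?_⟩
    have : 3 * (QIi * g) ^ 2 + g ^ 2 = -2 * g ^ 2 := by linear_combination 3 * g ^ 2 * hi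
    rw [this]
    exact mul_ne_zero (by norm_num) (pow_ne_zero 2 hg)
  · refine ⟨by linear_combination (QIi * g ^ 3) * hi, Or.inl ?_⟩
    have : 3 * (-(QIi * g)) ^ 2 + g ^ 2 = -2 * g ^ 2 := by linear_combination 3 * g ^ 2 * hi
    rw [this]
    exact mul_ne_zero (by norm_num) (pow_ne_zero 2 hg)

/-- two-torsion points. -/
def T0 {g : QI} (hg : g ≠ 0) : (Ecurve (g ^ 2)).toAffine.Point :=
  Affine.Point.some 0 0 (ns_zero hg (Or.inl rfl))

/-- two-torsion points. -/
def T1 {g : QI} (hg : g ≠ 0) : (Ecurve (g ^ 2)).toAffine.Point :=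
  Affine.Point.some (QIi * g) 0 (ns_zero hg (Or.inr (Or.inl rfl)))

/-- two-torsion points. -/
def T2 {g : QI} (hg : g ≠ 0) : (Ecurve (g ^ 2)).toAffine.Point :=
  Affine.Point.some (-(QIi * g)) 0 (ns_zero hg (Or.inr (Or.inr rfl)))

lemma T01 {g : QI} (hg : g ≠ 0) : T0 hg ≠ T1 hg := by
  intro h
  have := (Affine.Point.some.inj h).1
  exact mul_ne_zero QIi_ne hg this.symm

lemma T02 {g : QI} (hg : g ≠ 0) : T0 hg ≠ T2 hg := by
  intro h
  have := (Affine.Point.some.inj h).1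
  exact neg_ne_zero.2 (mul_ne_zero QIi_ne hg) this.symm

lemma T12 {g : QI} (hg : g ≠ 0) : T1 hg ≠ T2 hg := by
  intro h
  have := (Affine.Point.some.inj h).1
  exact ne_neg_self (mul_ne_zero QIi_ne hg) this

lemma y_zero {g : QI} (hg : g ≠ 0) {x y : QI} (h : (Ecurve (g ^ 2)).toAffine.Nonsingular x y)
    (hy : y = 0) : (Affine.Point.some x y h : (Ecurve (g ^ 2)).toAffine.Point) = T0 hg ∨
      Affine.Point.some x y h = T1 hg ∨ Affine.Point.some x y h = T2 hg := by
  subst hy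
  have he := (ns_iff.1 h).1
  have e : x * ((x - QIi * g) * (x + QIi * g)) = 0 := by
    linear_combination -he - x * g ^ 2 * QIi_sq
  rcases mul_eq_zero.1 e with e | e
  · subst e
    exact Or.inl rfl
  rcases mul_eq_zero.1 e with e | e
  · obtain rfl := sub_eq_zero.1 e
    exact Or.inr (Or.inl rfl)
  · obtain rfl := eq_neg_of_add_eq_zero_left e
    exact Or.inr (Or.inr rfl)

lemma two_tors {g : QI} (hg : g ≠ 0) {P : (Ecurve (g ^ 2)).toAffine.Point} (hP : P + P = 0) :
    P = 0 ∨ P = T0 hg ∨ P = T1 hg ∨ P = T2 hg := by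
  rcases P with _ | ⟨x, y, h⟩
  · exact Or.inl rfl
  · right
    by_cases hy : y = 0
    · exact y_zero hg h hy
    · obtain ⟨x', y', h', e, -⟩ := dbl h hy
      rw [e] at hP
      exact absurd hP (Affine.Point.some_ne_zero _)

/-- points with `x² = g²` double to `T0`. -/
lemma dbl_four {g : QI} (hg : g ≠ 0) {x y : QI} (h : (Ecurve (g ^ 2)).toAffine.Nonsingular x y)
    (hy : y ≠ 0) (hx : x ^ 2 = g ^ 2) :
    (Affine.Point.some x y h + Affine.Point.some x y h : (Ecurve (g ^ 2)).toAffine.Point)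
      = T0 hg := by
  obtain ⟨x', y', h', e, hx'⟩ := dbl h hy
  rw [e]
  have h0 : x' = 0 := by
    rw [hx, sub_self, zero_pow two_ne_zero] at hx'
    exact (mul_eq_zero.1 hx').resolve_right (mul_ne_zero (by norm_num) (pow_ne_zero 2 hy))
  subst h0
  have h1 : y' = 0 := by
    have := (ns_iff.1 h').1
    simpa using this
  subst h1
  rfl

lemma main_pos {g y : QI} (hg : g ≠ 0) (hy : y ^ 2 = 2 * g ^ 3) :
    Nonempty ((AddCommGroup.torsion (Ecurve (g ^ 2)).toAffine.Point) ≃+ ZMod 2 × ZMod 4) := by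
  have hy0 : y ≠ 0 := by
    rintro rfl
    have : 2 * g ^ 3 ≠ 0 := mul_ne_zero two_ne_zero (pow_ne_zero 3 hg)
    exact this (by rw [← hy]; ring)
  have hns : (Ecurve (g ^ 2)).toAffine.Nonsingular g y :=
    ns_iff.2 ⟨by rw [hy]; ring, Or.inr (mul_ne_zero two_ne_zero hy0)⟩
  set p : (Ecurve (g ^ 2)).toAffine.Point := Affine.Point.some g y hns with hp
  have hpp : p + p = T0 hg := dbl_four hg hns hy0 rfl
  have d0 : T0 hg + T0 hg = 0 := dbl_zero _
  have d1 : T1 hg + T1 hg = 0 := dbl_zero _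
  have e2 : T2 hg = T1 hg + T0 hg := by
    have : (T1 hg + T0 hg) + (T1 hg + T0 hg) = 0 := by
      rw [add_add_add_comm, d0, d1, add_zero]
    rcases two_tors hg this with h | h | h | h
    · exfalso
      apply T01 hg
      rw [eq_neg_of_add_eq_zero_right h, neg_eq_iff_add_eq_zero]
      exact d1
    · exact absurd (add_eq_right.1 h) (Affine.Point.some_ne_zero _)
    · exact absurd (add_eq_left.1 h) (Affine.Point.some_ne_zero _)
    · exact h.symm
  have key : ∀ Q : (Ecurve (g ^ 2)).toAffine.Point, Q + Q = 0 →
      ∃ a b : ℕ, Q = a • T1 hg + b • p := by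
    intro Q hQ
    rcases two_tors hg hQ with h | h | h | h
    · exact ⟨0, 0, by simp [h]⟩
    · exact ⟨0, 2, by rw [h, two_nsmul, hpp]; simp⟩
    · exact ⟨1, 0, by simp [h]⟩
    · exact ⟨1, 2, by rw [h, two_nsmul, hpp, e2]; simp⟩
  refine two_four_of _ (T1 hg) p d1 (Affine.Point.some_ne_zero _) ?_ ?_ ?_ (fin_of_dbl d1) ?_ ?_
  · rw [hpp]; exact Affine.Point.some_ne_zero _
  · rw [hpp]; exact (T01 hg).symm
  · rw [hpp]; exact d0
  · refine isOfFinAddOrder_iff_nsmul_eq_zero.2 ⟨4, by norm_num, ?_⟩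
    rw [← d0, ← hpp]; abel
  · intro Q hQ
    by_cases h0 : Q + Q = 0
    · exact key Q h0
    · rcases Q with _ | ⟨x, z, h⟩
      · exact absurd (add_zero _) h0
      · rcases tors_class hg h hQ with hz | hx
        · subst hz
          exact absurd (dbl_zero h) h0
        · have hz : z ≠ 0 := by
            rintro rfl
            exact h0 (dbl_zero h)
          have hQQ := dbl_four hg h hz hx
          obtain ⟨a, b, hab⟩ := key (Affine.Point.some x z h - p) (by
            rw [sub_add_sub_comm, hQQ, hpp, sub_self])
          exact ⟨a, b + 1, by rw [succ_nsmul, ← add_assoc, ← hab, sub_add_cancel]⟩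

lemma main_neg {g : QI} (hg : g ≠ 0) (hno : ∀ y : QI, y ^ 2 ≠ 2 * g ^ 3) :
    Nonempty ((AddCommGroup.torsion (Ecurve (g ^ 2)).toAffine.Point) ≃+ ZMod 2 × ZMod 2) := by
  refine klein_of _ (T0 hg) (T1 hg) (T2 hg) (Affine.Point.some_ne_zero _)
    (Affine.Point.some_ne_zero _) (Affine.Point.some_ne_zero _) (T01 hg) (T02 hg) (T12 hg)
    (dbl_zero _) (dbl_zero _) (dbl_zero _) ?_
  intro Q
  constructor
  · intro hQ
    rcases Q with _ | ⟨x, y, h⟩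
    · exact Or.inl rfl
    · right
      rcases tors_class hg h hQ with hy | hx
      · exact y_zero hg h hy
      · exfalso
        have he := (ns_iff.1 h).1
        rcases sq_eq_sq_iff_eq_or_eq_neg.1 hx with rfl | rfl
        · exact hno y (by rw [he]; ring)
        · exact hno (QIi * y) (by linear_combination -he + y ^ 2 * QIi_sq)
  · rintro (rfl | rfl | rfl | rfl)
    · exact AddSubgroup.zero_mem _
    · exact fin_of_dbl (dbl_zero _)
    · exact fin_of_dbl (dbl_zero _)
    · exact fin_of_dbl (dbl_zero _)

/-- for squarefree `γ ∈ ℤ[i]`, the torsion subgroup of `E_{γ²}(ℚ(i))` is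
`ℤ/2ℤ ⊕ ℤ/4ℤ` if `γ = ±i`, and `ℤ/2ℤ ⊕ ℤ/2ℤ` otherwise. -/
theorem stmt4 (γ : GaussianInt) (hγ : Squarefree γ) :
    (γ = gi ∨ γ = -gi →
      Nonempty ((AddCommGroup.torsion (Ecurve (toQI (γ ^ 2))).toAffine.Point) ≃+
        ZMod 2 × ZMod 4)) ∧
    (γ ≠ gi ∧ γ ≠ -gi →
      Nonempty ((AddCommGroup.torsion (Ecurve (toQI (γ ^ 2))).toAffine.Point) ≃+
        ZMod 2 × ZMod 2)) := by
  have hg : toQIHom γ ≠ 0 := toQIHom_ne hγ.ne_zero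
  rw [toQI_eq, map_pow]
  constructor
  · rintro (rfl | rfl)
    · apply main_pos hg (y := 1 - QIi)
      rw [toQIHom_gi]
      linear_combination (1 - 2 * QIi) * QIi_sq
    · apply main_pos hg (y := 1 + QIi)
      rw [map_neg, toQIHom_gi]
      linear_combination (1 + 2 * QIi) * QIi_sq
  · rintro ⟨h1, h2⟩
    apply main_neg hg
    intro y hy
    rcases gamma_of_sq hγ hy with h | h
    · exact h1 h
    · exact h2 h
end
end

section
/- Let α ∈ ℚ(i) be nonzero. Then the rank of E_α(ℚ(i)) is even; that is, the dimension of the ℚ-vector space E_α(ℚ(i)) ⊗_ℤ ℚ is an even natural number. -/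
noncomputable section

open WeierstrassCurve
open scoped IntermediateField

open scoped TensorProduct


namespace CMRank

set_option linter.unusedSectionVars false
set_option linter.unusedVariables false

open WeierstrassCurve WeierstrassCurve.Affine

/-- The curve `y² = x³ + a x` over a general field. -/
def GC {K : Type*} [Field K] (a : K) : WeierstrassCurve K := ⟨0, 0, 0, a, 0⟩

section Curve

variable {K : Type*} [Field K] {a : K}

lemma eqn_iff (x y : K) : (GC a).toAffine.Equation x y ↔ y ^ 2 = x ^ 3 + a * x := by
  rw [Affine.equation_iff]; simp [GC]

lemma negY_eq (x y : K) : (GC a).toAffine.negY x y = -y := by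
  simp [Affine.negY, GC]

lemma isElliptic [CharZero K] (ha : a ≠ 0) : (GC a).IsElliptic := by
  refine ⟨?_⟩
  have : (GC a).Δ = -64 * a ^ 3 := by
    simp only [WeierstrassCurve.Δ, WeierstrassCurve.b₂, WeierstrassCurve.b₄, WeierstrassCurve.b₆,
      WeierstrassCurve.b₈, GC]; ring
  rw [this]
  exact (mul_ne_zero (by norm_num) (pow_ne_zero _ ha)).isUnit

lemma nonsing_iff [CharZero K] (ha : a ≠ 0) (x y : K) :
    (GC a).toAffine.Nonsingular x y ↔ y ^ 2 = x ^ 3 + a * x := by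
  have := isElliptic ha
  rw [← eqn_iff, Affine.equation_iff_nonsingular]

variable [DecidableEq K]

lemma exists_slope [CharZero K] {x₁ y₁ x₂ y₂ : K} (h₁ : (GC a).toAffine.Nonsingular x₁ y₁)
    (h₂ : (GC a).toAffine.Nonsingular x₂ y₂) (h : ¬ (x₁ = x₂ ∧ y₁ = -y₂)) :
    ∃ l : K, y₂ - y₁ = l * (x₂ - x₁) ∧ l * (y₁ + y₂) = x₁ ^ 2 + x₁ * x₂ + x₂ ^ 2 + a ∧
      ∃ h₃ : (GC a).toAffine.Nonsingular (l ^ 2 - x₁ - x₂) (-(l * (l ^ 2 - x₁ - x₂ - x₁) + y₁)),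
      Point.some x₁ y₁ h₁ + Point.some x₂ y₂ h₂ = Point.some _ _ h₃ := by
  have e₁ := (eqn_iff _ _).1 h₁.1
  have e₂ := (eqn_iff _ _).1 h₂.1
  have hxy : ¬ (x₁ = x₂ ∧ y₁ = (GC a).toAffine.negY x₂ y₂) := by rwa [negY_eq]
  have hadd := Point.add_some hxy (h₁ := h₁) (h₂ := h₂)
  have hns := nonsingular_add h₁ h₂ hxy
  set l := (GC a).toAffine.slope x₁ x₂ y₁ y₂ with hl
  have hX : (GC a).toAffine.addX x₁ x₂ l = l ^ 2 - x₁ - x₂ := by simp [Affine.addX, GC]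
  have hY : (GC a).toAffine.addY x₁ x₂ y₁ l = -(l * (l ^ 2 - x₁ - x₂ - x₁) + y₁) := by
    rw [Affine.addY, negY_eq, Affine.negAddY, hX]
  refine ⟨l, ?_, ?_, ?_⟩
  · by_cases hx : x₁ = x₂
    · have := Y_eq_of_Y_ne h₁.1 h₂.1 hx (fun h' => hxy ⟨hx, h'⟩)
      subst hx; subst this; simp
    · rw [hl, slope_of_X_ne hx]
      have : x₁ - x₂ ≠ 0 := sub_ne_zero.2 hx
      field_simp; ring
  · by_cases hx : x₁ = x₂
    · have := Y_eq_of_Y_ne h₁.1 h₂.1 hx (fun h' => hxy ⟨hx, h'⟩)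
      have h0 : y₁ ≠ (GC a).toAffine.negY x₂ y₂ := fun h' => hxy ⟨hx, h'⟩
      rw [hl, slope_of_Y_ne hx h0, negY_eq]
      subst hx; subst this
      rw [negY_eq] at h0
      have h1 : y₁ - -y₁ ≠ 0 := sub_ne_zero.2 h0
      have h2 : y₁ - -y₁ = y₁ + y₁ := by ring
      rw [div_mul_eq_mul_div, ← h2, mul_div_assoc, div_self h1]
      simp [GC]; ring
    · rw [hl, slope_of_X_ne hx]
      have : x₁ - x₂ ≠ 0 := sub_ne_zero.2 hx
      field_simp; linear_combination e₁ - e₂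
  · rw [hX, hY] at hns
    refine ⟨hns, ?_⟩
    rw [hadd]
    congr 1

lemma some_congr {x y x' y' : K} {h : (GC a).toAffine.Nonsingular x y}
    {h' : (GC a).toAffine.Nonsingular x' y'} (hx : x = x') (hy : y = y') :
    Point.some x y h = Point.some x' y' h' := by subst hx; subst hy; rfl

lemma neg_some' {x y : K} (h : (GC a).toAffine.Nonsingular x y)
    (h' : (GC a).toAffine.Nonsingular x (-y)) :
    -Point.some x y h = Point.some x (-y) h' := by
  rw [Point.neg_some]; exact some_congr rfl (negY_eq _ _)

lemma nonsing_neg {x y : K} (h : (GC a).toAffine.Nonsingular x y) :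
    (GC a).toAffine.Nonsingular x (-y) := by
  have := (nonsingular_neg x y).2 h
  rwa [negY_eq] at this

lemma add_opp {x₁ y₁ x₂ y₂ : K} (h₁ : (GC a).toAffine.Nonsingular x₁ y₁)
    (h₂ : (GC a).toAffine.Nonsingular x₂ y₂) (h : x₁ = x₂ ∧ y₁ = -y₂) :
    Point.some x₁ y₁ h₁ + Point.some x₂ y₂ h₂ = 0 :=
  Point.add_of_Y_eq h.1 (by rw [negY_eq]; exact h.2)

/-- Characterization of addition by any admissible slope. -/
lemma add_of_slope [CharZero K] (ha : a ≠ 0) {x₁ y₁ x₂ y₂ x₃ y₃ l : K}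
    (h₁ : (GC a).toAffine.Nonsingular x₁ y₁)
    (h₂ : (GC a).toAffine.Nonsingular x₂ y₂) (h : ¬ (x₁ = x₂ ∧ y₁ = -y₂))
    (hl₁ : y₂ - y₁ = l * (x₂ - x₁)) (hl₂ : l * (y₁ + y₂) = x₁ ^ 2 + x₁ * x₂ + x₂ ^ 2 + a)
    (hx : x₃ = l ^ 2 - x₁ - x₂) (hy : y₃ = -(l * (x₃ - x₁) + y₁)) :
    ∃ h₃, Point.some x₁ y₁ h₁ + Point.some x₂ y₂ h₂ = Point.some x₃ y₃ h₃ := by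
  obtain ⟨m, hm₁, hm₂, h₃, hadd⟩ := exists_slope h₁ h₂ h
  have : m = l := by
    by_contra hne
    have hne : m - l ≠ 0 := sub_ne_zero.2 hne
    apply h
    constructor
    · have : (m - l) * (x₂ - x₁) = 0 := by linear_combination hl₁ - hm₁
      have := (mul_eq_zero.1 this).resolve_left hne
      linear_combination -this
    · have : (m - l) * (y₁ + y₂) = 0 := by linear_combination hm₂ - hl₂
      have := (mul_eq_zero.1 this).resolve_left hne
      linear_combination this
  subst this
  subst hx; subst hy
  exact ⟨h₃, hadd⟩

end Curve

section CM

variable {K : Type*} [Field K] [CharZero K] {a : K} [DecidableEq K]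

lemma nonsing_i (ha : a ≠ 0) {i : K} (hi : i ^ 2 = -1) {x y : K}
    (h : (GC a).toAffine.Nonsingular x y) : (GC a).toAffine.Nonsingular (-x) (i * y) := by
  rw [nonsing_iff ha] at h ⊢
  linear_combination i ^ 2 * h + (x ^ 3 + a * x) * hi

/-- multiplication by `i`, as a function. -/
def Jfun (ha : a ≠ 0) {i : K} (hi : i ^ 2 = -1) : (GC a).toAffine.Point → (GC a).toAffine.Point
  | .zero => .zero
  | .some x y h => .some (-x) (i * y) (nonsing_i ha hi h)

/-- multiplication by `i`. -/
def J (ha : a ≠ 0) {i : K} (hi : i ^ 2 = -1) :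
    (GC a).toAffine.Point →+ (GC a).toAffine.Point where
  toFun := Jfun ha hi
  map_zero' := rfl
  map_add' P Q := by
    have hi0 : i ≠ 0 := by rintro rfl; norm_num at hi
    rcases P with _ | ⟨x₁, y₁, h₁⟩
    · change Jfun ha hi (0 + Q) = 0 + Jfun ha hi Q
      simp
    rcases Q with _ | ⟨x₂, y₂, h₂⟩
    · change Jfun ha hi (_ + 0) = Jfun ha hi _ + 0
      simp
    by_cases h : x₁ = x₂ ∧ y₁ = -y₂
    · rw [add_opp h₁ h₂ h]
      change 0 = Point.some (-x₁) (i * y₁) _ + Point.some (-x₂) (i * y₂) _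
      rw [add_opp]
      rw [h.1, h.2]; simp
    · obtain ⟨l, hl₁, hl₂, h₃, hadd⟩ := exists_slope h₁ h₂ h
      rw [hadd]
      change Point.some _ _ _ = Point.some (-x₁) (i * y₁) _ + Point.some (-x₂) (i * y₂) _
      have h' : ¬ (-x₁ = -x₂ ∧ i * y₁ = -(i * y₂)) := by
        rintro ⟨p, q⟩
        apply h
        refine ⟨neg_injective p, ?_⟩
        apply mul_left_cancel₀ hi0
        rw [q]; ring
      obtain ⟨h₄, e⟩ := add_of_slope ha (l := -i * l) (nonsing_i ha hi h₁) (nonsing_i ha hi h₂) h'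
        (by linear_combination i * hl₁)
        (by linear_combination hl₂ - l * (y₁ + y₂) * hi) rfl rfl
      rw [e]
      apply some_congr
      · linear_combination -l ^ 2 * hi
      · linear_combination (-i * l ^ 3) * hi

lemma J_some (ha : a ≠ 0) {i : K} (hi : i ^ 2 = -1) {x y : K}
    (h : (GC a).toAffine.Nonsingular x y) :
    J ha hi (.some x y h) = .some (-x) (i * y) (nonsing_i ha hi h) := rfl

lemma J_J (ha : a ≠ 0) {i : K} (hi : i ^ 2 = -1) (P : (GC a).toAffine.Point) :
    J ha hi (J ha hi P) = -P := by
  rcases P with _ | ⟨x, y, h⟩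
  · rfl
  · rw [J_some, J_some, neg_some' h (nonsing_neg h)]
    apply some_congr
    · ring
    · linear_combination y * hi

end CM

section Heights

variable {K : Type*} [Field K] [CharZero K] {a : K} [DecidableEq K]

/-- `addSubMap` on coordinate vectors, explicitly. -/
lemma addSub_eval (s t u : K) :
    (fun j ↦ ((GC a).addSubMap j).eval ![s, t, u]) =
      ![(s - a * u) ^ 2 + 0, 2 * t * (s + a * u), t ^ 2 - 4 * s * u] := by
  ext j
  fin_cases j <;>
    simp [WeierstrassCurve.addSubMap, WeierstrassCurve.b₂, WeierstrassCurve.b₄,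
      WeierstrassCurve.b₆, WeierstrassCurve.b₈, GC] <;> ring

lemma addSub_self (ha : a ≠ 0) {x y : K} (h : (GC a).toAffine.Nonsingular x y) :
    ∃ c : K, c ≠ 0 ∧ (![(x * x - a) ^ 2, 2 * (x + x) * (x * x + a), 0] : Fin 3 → K) =
      c • Point.sym2x (Point.some x y h + Point.some x y h) 0 := by
  have e := (nonsing_iff ha x y).1 h
  by_cases hy : y = 0
  · subst hy
    rw [add_opp h h ⟨rfl, by simp⟩]
    have hx : x * (x ^ 2 + a) = 0 := by linear_combination -e
    have : (x * x - a) ≠ 0 := by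
      intro h0
      rcases mul_eq_zero.1 hx with hx | hx
      · subst hx; apply ha; linear_combination -h0
      · apply ha
        have : 2 * a = 0 := by linear_combination hx - h0
        simpa using this
    refine ⟨(x * x - a) ^ 2, pow_ne_zero _ this, ?_⟩
    ext j
    fin_cases j
    · simp
    · simp [-mul_eq_zero]; linear_combination 4 * hx
    · simp
  · have h' : ¬ (x = x ∧ y = -y) := by
      rintro ⟨-, q⟩
      apply hy
      have : 2 * y = 0 := by linear_combination q
      simpa using this
    obtain ⟨l, -, hl₂, h₃, hadd⟩ := exists_slope h h h'
    rw [hadd]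
    refine ⟨4 * y ^ 2, by simpa using hy, ?_⟩
    ext j
    fin_cases j
    · simp
      linear_combination (-(2 * l * y) - (3 * x ^ 2 + a)) * hl₂ + 8 * x * e
    · simp; linear_combination -4 * e
    · simp

lemma addSub_ne (ha : a ≠ 0) {x₁ y₁ x₂ y₂ : K} (h₁ : (GC a).toAffine.Nonsingular x₁ y₁)
    (h₂ : (GC a).toAffine.Nonsingular x₂ y₂) (hx : x₁ ≠ x₂) :
    ∃ c : K, c ≠ 0 ∧
      (![(x₁ * x₂ - a) ^ 2, 2 * (x₁ + x₂) * (x₁ * x₂ + a), (x₁ + x₂) ^ 2 - 4 * (x₁ * x₂)]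
        : Fin 3 → K) =
      c • Point.sym2x (Point.some x₁ y₁ h₁ + Point.some x₂ y₂ h₂)
        (Point.some x₁ y₁ h₁ - Point.some x₂ y₂ h₂) := by
  have e₁ := (nonsing_iff ha _ _).1 h₁
  have e₂ := (nonsing_iff ha _ _).1 h₂
  have hd : x₁ - x₂ ≠ 0 := sub_ne_zero.2 hx
  rw [sub_eq_add_neg (Point.some x₁ y₁ h₁), neg_some' h₂ (nonsing_neg h₂)]
  obtain ⟨l, hl₁, hl₂, h₃, hadd⟩ := exists_slope h₁ h₂ (fun h => hx h.1)
  obtain ⟨m, hm₁, hm₂, h₄, hsub⟩ := exists_slope h₁ (nonsing_neg h₂) (fun h => hx h.1)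
  rw [hadd, hsub]
  have hl : l = (y₁ - y₂) / (x₁ - x₂) := by
    field_simp; linear_combination hl₁
  have hm : m = (y₁ + y₂) / (x₁ - x₂) := by
    field_simp; linear_combination hm₁
  refine ⟨(x₁ - x₂) ^ 2, pow_ne_zero _ hd, ?_⟩
  have hs : (x₁ - x₂) ^ 2 * ((l ^ 2 - x₁ - x₂) + (m ^ 2 - x₁ - x₂)) =
      2 * (x₁ + x₂) * (x₁ * x₂ + a) := by
    rw [hl, hm]; field_simp
    linear_combination 2 * e₁ + 2 * e₂
  have hp : (x₁ - x₂) ^ 2 * ((l ^ 2 - x₁ - x₂) * (m ^ 2 - x₁ - x₂)) = (x₁ * x₂ - a) ^ 2 := by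
    rw [hl, hm]; field_simp
    have hy1 : y₁ ^ 2 = x₁ ^ 3 + a * x₁ := e₁
    have hy2 : y₂ ^ 2 = x₂ ^ 3 + a * x₂ := e₂
    have e : ((y₁ - y₂) ^ 2 - x₁ * (x₁ - x₂) ^ 2 - x₂ * (x₁ - x₂) ^ 2) *
        ((y₁ + y₂) ^ 2 - x₁ * (x₁ - x₂) ^ 2 - x₂ * (x₁ - x₂) ^ 2) =
        (y₁ ^ 2 + y₂ ^ 2 - (x₁ + x₂) * (x₁ - x₂) ^ 2) ^ 2 - 4 * y₁ ^ 2 * y₂ ^ 2 := by ring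
    first
    | (rw [e, hy1, hy2]; ring)
    | (rw [show ((y₁ - y₂) ^ 2 - (x₁ - x₂) ^ 2 * x₁ - (x₁ - x₂) ^ 2 * x₂) *
        ((y₁ + y₂) ^ 2 - (x₁ - x₂) ^ 2 * x₁ - (x₁ - x₂) ^ 2 * x₂) =
        (y₁ ^ 2 + y₂ ^ 2 - (x₁ + x₂) * (x₁ - x₂) ^ 2) ^ 2 - 4 * y₁ ^ 2 * y₂ ^ 2 by ring,
          hy1, hy2]; ring)
  ext j
  fin_cases j
  · simp; exact hp.symm
  · simp; linear_combination -hs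
  · simp; ring

lemma addSub_sym2x (ha : a ≠ 0) (P Q : (GC a).toAffine.Point) :
    ∃ c : K, c ≠ 0 ∧ (fun j ↦ ((GC a).addSubMap j).eval (P.sym2x Q)) =
      c • (P + Q).sym2x (P - Q) := by
  rcases P with _ | ⟨x₁, y₁, h₁⟩
  · rw [← Point.zero_def, zero_add, zero_sub, Point.sym2x_neg_right]
    refine ⟨1, one_ne_zero, ?_⟩
    rcases Q with _ | ⟨x₂, y₂, h₂⟩
    · rw [← Point.zero_def, Point.sym2x_zero_zero, addSub_eval]
      simp
    · rw [Point.sym2x_zero_some, Point.sym2x_some_some, addSub_eval]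
      simp; constructor <;> ring
  rcases Q with _ | ⟨x₂, y₂, h₂⟩
  · rw [← Point.zero_def, add_zero, sub_zero]
    refine ⟨1, one_ne_zero, ?_⟩
    rw [Point.sym2x_some_zero, Point.sym2x_some_some, addSub_eval]
    simp; constructor <;> ring
  rw [Point.sym2x_some_some, addSub_eval]
  by_cases hx : x₁ = x₂
  · have hE : (![(x₁ * x₂ - a * 1) ^ 2 + 0, 2 * (x₁ + x₂) * (x₁ * x₂ + a * 1),
        (x₁ + x₂) ^ 2 - 4 * (x₁ * x₂) * 1] : Fin 3 → K) =
        ![(x₁ * x₁ - a) ^ 2, 2 * (x₁ + x₁) * (x₁ * x₁ + a), 0] := by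
      subst hx
      simp; ring
    rw [hE]
    obtain ⟨c, hc, e⟩ := addSub_self ha h₁
    refine ⟨c, hc, ?_⟩
    rw [e]
    congr 1
    have e₁ := (nonsing_iff ha _ _).1 h₁
    have e₂ := (nonsing_iff ha _ _).1 h₂
    subst hx
    have : (y₁ - y₂) * (y₁ + y₂) = 0 := by linear_combination e₁ - e₂
    rcases mul_eq_zero.1 this with h | h
    · have : y₁ = y₂ := by linear_combination h
      subst this
      rw [sub_self]
    · have : y₂ = -y₁ := by linear_combination h
      subst this
      rw [← neg_some' h₁ h₂, add_neg_cancel, sub_neg_eq_add, Point.sym2x_comm]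
  · obtain ⟨c, hc, e⟩ := addSub_ne ha h₁ h₂ hx
    refine ⟨c, hc, ?_⟩
    rw [← e]
    simp

open Height

/-- naive height -/
noncomputable def ht [AdmissibleAbsValues K] (P : (GC a).toAffine.Point) : ℝ := logHeight P.xRep

lemma parallelogram [AdmissibleAbsValues K] (ha : a ≠ 0) :
    ∃ C : ℝ, ∀ P Q : (GC a).toAffine.Point,
      |ht (P + Q) + ht (P - Q) - 2 * (ht P + ht Q)| ≤ C := by
  have := isElliptic ha
  obtain ⟨C₁, hC₁⟩ := (GC a).abs_logHeight_addSubMap_sub_two_mul_logHeight_le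
  obtain ⟨C₂, hC₂⟩ := abs_logHeight_sym2_sub_le K
  have key : ∀ P Q : (GC a).toAffine.Point,
      |logHeight (P.sym2x Q) - (ht P + ht Q)| ≤ C₂ := by
    intro P Q
    have e : ∀ R : (GC a).toAffine.Point, R.xRep = ![R.xRep 0, R.xRep 1] := by
      intro R; ext j; fin_cases j <;> rfl
    have h1 := P.xRep_ne_zero
    have h2 := Q.xRep_ne_zero
    have := hC₂ (e P ▸ h1) (e Q ▸ h2)
    rw [← e P, ← e Q] at this
    exact this
  refine ⟨C₁ + 3 * C₂, fun P Q ↦ ?_⟩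
  obtain ⟨c, hc, e⟩ := addSub_sym2x ha P Q
  have h1 := hC₁ (P.sym2x Q)
  rw [e, logHeight_smul_eq_logHeight _ hc] at h1
  have h2 := key P Q
  have h3 := key (P + Q) (P - Q)
  rw [abs_le] at *
  constructor <;> linarith [h1.1, h1.2, h2.1, h2.2, h3.1, h3.2]

lemma northcott_ht [NumberField K] :
    Northcott (ht : (GC a).toAffine.Point → ℝ) := by
  refine ⟨fun B ↦ ?_⟩
  have hfin : ({![1, 0]} ∪ (fun x : K ↦ ![x, 1]) '' {x : K | logHeight₁ x ≤ B}).Finite :=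
    (Set.finite_singleton _).union ((NumberField.finite_setOfPred_logHeight₁_le K B).image _)
  refine Set.Finite.of_finite_fibers (Point.xRep) (hfin.subset ?_) ?_
  · rintro _ ⟨P, hP, rfl⟩
    rcases P with _ | ⟨x, y, h⟩
    · left; rfl
    · right
      refine ⟨x, ?_, rfl⟩
      simp only [Set.mem_ofPred_eq]
      rw [logHeight₁_eq_logHeight]
      exact hP
  · rintro _ ⟨P, hP, rfl⟩
    refine (Set.toFinite {P, -P}).subset ?_
    rintro Q ⟨-, hQ⟩
    exact Point.eq_or_eq_neg_of_xRep_eq_xRep hQ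

lemma fg_of_index [NumberField K] (ha : a ≠ 0)
    (H : (nsmulAddMonoidHom (α := (GC a).toAffine.Point) 2).range.FiniteIndex) :
    AddGroup.FG (GC a).toAffine.Point := by
  obtain ⟨C, hC⟩ := parallelogram ha
  have := northcott_ht (a := a)
  exact AddCommGroup.fg_of_descent' (h := ht) H (fun P ↦ by unfold ht; positivity) hC

end Heights

section Descent

variable {K : Type*} [Field K] [CharZero K] {a : K} [DecidableEq K]

/-- multiplication by `1 + i` -/
def phi (ha : a ≠ 0) {i : K} (hi : i ^ 2 = -1) :
    (GC a).toAffine.Point →+ (GC a).toAffine.Point := AddMonoidHom.id _ + J ha hi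

lemma phi_phi (ha : a ≠ 0) {i : K} (hi : i ^ 2 = -1) (P : (GC a).toAffine.Point) :
    phi ha hi (phi ha hi P) = 2 • J ha hi P := by
  simp only [phi, AddMonoidHom.add_apply, AddMonoidHom.id_apply, map_add, J_J]
  abel

lemma mem_phi_of_sq (ha : a ≠ 0) {i : K} (hi : i ^ 2 = -1) {x y s : K}
    (h : (GC a).toAffine.Nonsingular x y) (hs : s ≠ 0) (hx : x = s ^ 2) :
    Point.some x y h ∈ (phi ha hi).range := by
  have e := (nonsing_iff ha _ _).1 h
  subst hx
  obtain ⟨w, hw⟩ : ∃ w, w * s = y := ⟨y / s, by field_simp⟩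
  have hw2 : w ^ 2 = s ^ 4 + a := by
    apply mul_left_cancel₀ (pow_ne_zero 2 hs)
    rw [← hw] at e
    linear_combination e
  obtain ⟨u, hu⟩ : ∃ u, u = i * s ^ 2 + i * w := ⟨_, rfl⟩
  have hu2 : 2 * i * s ^ 2 * u = u ^ 2 + a := by
    rw [hu]
    linear_combination (s ^ 4 - w ^ 2) * hi + hw2
  have hu0 : u ≠ 0 := by
    intro h0
    rw [h0] at hu2
    apply ha
    linear_combination -hu2
  have hns : (GC a).toAffine.Nonsingular u ((1 + i) * s * u) := by
    rw [nonsing_iff ha]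
    linear_combination u * hu2 + s ^ 2 * u ^ 2 * hi
  refine ⟨Point.some _ _ hns, ?_⟩
  change Point.some _ _ hns + J ha hi _ = _
  rw [J_some]
  obtain ⟨h₃, hadd⟩ := add_of_slope ha (x₃ := s ^ 2) (y₃ := y) (l := s) hns (nonsing_i ha hi hns)
    (fun h' => hu0 (by
      have : 2 * u = 0 := by linear_combination h'.1
      simpa using this))
    (by linear_combination s * u * hi)
    (by linear_combination hu2 + s ^ 2 * u * hi)
    (by ring)
    (by rw [← hw]; linear_combination (i * s) * hu + s * (s ^ 2 + w) * hi)
  rw [hadd]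

lemma mem_phi_of_zero (ha : a ≠ 0) {i : K} (hi : i ^ 2 = -1) {x y r : K}
    (h : (GC a).toAffine.Nonsingular x y) (hx : x = 0) (hr : a = r ^ 2) :
    Point.some x y h ∈ (phi ha hi).range := by
  have e := (nonsing_iff ha _ _).1 h
  subst hx
  have hy : y = 0 := by
    have : y ^ 2 = 0 := by rw [e]; ring
    exact pow_eq_zero_iff (two_ne_zero) |>.1 this
  subst hy
  have hns : (GC a).toAffine.Nonsingular (i * r) 0 := by
    rw [nonsing_iff ha, hr]
    linear_combination (-i * r ^ 3) * hi
  have hi0 : i ≠ 0 := by rintro rfl; norm_num at hi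
  have hr0 : r ≠ 0 := by rintro rfl; apply ha; rw [hr]; ring
  refine ⟨Point.some _ _ hns, ?_⟩
  change Point.some _ _ hns + J ha hi _ = _
  rw [J_some]
  obtain ⟨h₃, hadd⟩ := add_of_slope ha (x₃ := 0) (y₃ := 0) (l := 0) hns (nonsing_i ha hi hns)
    (fun h' => mul_ne_zero hi0 hr0 (by
      have : 2 * (i * r) = 0 := by linear_combination h'.1
      simpa using this))
    (by ring)
    (by linear_combination (-r ^ 2) * hi - hr)
    (by ring)
    (by ring)
  rw [hadd]

lemma add_mem_phi (ha : a ≠ 0) {i : K} (hi : i ^ 2 = -1) {x₁ y₁ x₂ y₂ r : K}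
    (h₁ : (GC a).toAffine.Nonsingular x₁ y₁)
    (h₂ : (GC a).toAffine.Nonsingular x₂ y₂) (hr : r ≠ 0) (hx : x₁ * x₂ = r ^ 2) :
    Point.some x₁ y₁ h₁ + Point.some x₂ y₂ h₂ ∈ (phi ha hi).range := by
  have e₁ := (nonsing_iff ha _ _).1 h₁
  by_cases h : x₁ = x₂ ∧ y₁ = -y₂
  · rw [add_opp h₁ h₂ h]; exact zero_mem _
  obtain ⟨l, hl₁, hl₂, h₃, hadd⟩ := exists_slope h₁ h₂ h
  rw [hadd]
  have hn : x₁ * x₂ * (l ^ 2 - x₁ - x₂) = (y₁ - l * x₁) ^ 2 := by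
    linear_combination x₁ * hl₂ - x₁ * l * hl₁ - e₁
  have hx1 : x₁ ≠ 0 := by
    rintro rfl
    apply hr
    have : r ^ 2 = 0 := by rw [← hx]; ring
    exact pow_eq_zero_iff (two_ne_zero) |>.1 this
  by_cases h0 : l ^ 2 - x₁ - x₂ = 0
  · refine mem_phi_of_zero ha hi h₃ h0 (r := r) ?_
    rw [← hx]
    rw [h0, mul_zero] at hn
    have hy : y₁ - l * x₁ = 0 := pow_eq_zero_iff (two_ne_zero) |>.1 hn.symm
    have hy : y₁ = l * x₁ := by linear_combination hy
    rw [hy] at e₁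
    apply mul_left_cancel₀ hx1
    linear_combination -e₁ + x₁ ^ 2 * h0
  · refine mem_phi_of_sq ha hi h₃ (s := (y₁ - l * x₁) / r) ?_ ?_
    · apply div_ne_zero _ hr
      intro h'
      rw [h'] at hn
      apply mul_ne_zero (pow_ne_zero 2 hr) h0
      rw [← hx, hn]; ring
    · rw [div_pow, ← hn, hx]
      field_simp

lemma sub_mem_phi (ha : a ≠ 0) {i : K} (hi : i ^ 2 = -1) {x₁ y₁ x₂ y₂ r : K}
    (h₁ : (GC a).toAffine.Nonsingular x₁ y₁)
    (h₂ : (GC a).toAffine.Nonsingular x₂ y₂) (hr : r ≠ 0) (hx : x₁ * x₂ = r ^ 2) :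
    Point.some x₁ y₁ h₁ - Point.some x₂ y₂ h₂ ∈ (phi ha hi).range := by
  rw [sub_eq_add_neg, neg_some' h₂ (nonsing_neg h₂)]
  exact add_mem_phi ha hi h₁ _ hr hx

lemma exists_class (O : Type*) [CommRing O] [IsDomain O] [UniqueFactorizationMonoid O]
    [Algebra O K] [IsFractionRing O K] (ha : a ≠ 0) :
    ∃ N : O, N ≠ 0 ∧ ∀ x y : K, x ≠ 0 → y ^ 2 = x ^ 3 + a * x →
      ∃ e : O, e ∣ N ∧ ∃ r : K, r ≠ 0 ∧ x = algebraMap O K e * r ^ 2 := by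
  classical
  letI : GCDMonoid O := UniqueFactorizationMonoid.toGCDMonoid O
  have hinj := IsFractionRing.injective O K
  obtain ⟨A, B, hB, hAB⟩ := IsFractionRing.div_surjective (A := O) a
  have hB0 : B ≠ 0 := nonZeroDivisors.ne_zero hB
  have hBK : algebraMap O K B ≠ 0 := by simpa using hB0
  have hA0 : A ≠ 0 := by
    rintro rfl
    apply ha; rw [← hAB]; simp
  refine ⟨A * B * B ^ 2, by simp [hA0, hB0], fun x y hx hxy ↦ ?_⟩
  obtain ⟨p, q, hpq, hx'⟩ := IsFractionRing.exists_reduced_fraction (A := O) x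
  rw [IsFractionRing.mk'_eq_div] at hx'
  have hq0 : (q : O) ≠ 0 := nonZeroDivisors.ne_zero q.2
  obtain ⟨q, hq⟩ := q
  simp only at hpq hx' hq0
  have hqK : algebraMap O K q ≠ 0 := by simpa using hq0
  have hp0 : p ≠ 0 := by
    rintro rfl
    apply hx; rw [← hx']; simp
  have hc : (algebraMap O K) (p * q * (B * (p ^ 2 * B + A * q ^ 2))) =
      (algebraMap O K q ^ 2 * algebraMap O K B * y) ^ 2 := by
    rw [mul_pow, hxy, ← hx', ← hAB]
    simp only [map_mul, map_add, map_pow]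
    field_simp
  obtain ⟨c, hc'⟩ : ∃ c, algebraMap O K c = algebraMap O K q ^ 2 * algebraMap O K B * y := by
    apply IsIntegrallyClosed.exists_algebraMap_eq_of_isIntegral_pow (n := 2) (by norm_num)
    rw [← hc]
    exact isIntegral_algebraMap
  rw [← hc', ← map_pow] at hc
  have hc := hinj hc
  obtain ⟨m', n', hm, hn, hu⟩ := extract_gcd (p * q) (B * (p ^ 2 * B + A * q ^ 2))
  set g := gcd (p * q) (B * (p ^ 2 * B + A * q ^ 2)) with hg
  have hg0 : g ≠ 0 := by
    rintro h0
    rw [h0, zero_mul] at hm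
    exact mul_ne_zero hp0 hq0 hm
  have hgc : g ∣ c := by
    refine (UniqueFactorizationMonoid.pow_dvd_pow_iff_dvd (two_ne_zero)).1 ⟨m' * n', ?_⟩
    rw [← hc, hm, hn]; ring
  obtain ⟨c', rfl⟩ := hgc
  have hmn : m' * n' = c' ^ 2 := by
    apply mul_left_cancel₀ (pow_ne_zero 2 hg0)
    rw [hm, hn] at hc
    linear_combination hc
  obtain ⟨d, u, hd⟩ := exists_associated_pow_of_mul_eq_pow hu hmn
  have hgN : g ∣ A * B * B ^ 2 := by
    have h1 : g ∣ p * q := gcd_dvd_left _ _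
    have h2 : g ∣ B * (p ^ 2 * B + A * q ^ 2) := gcd_dvd_right _ _
    obtain ⟨g1, g2, hg1, hg2, hgg⟩ := exists_dvd_and_dvd_of_dvd_mul h1
    rw [hgg] at h2 ⊢
    apply mul_dvd_mul
    · have h3 : g1 ∣ A * B * q ^ 2 := by
        have := (dvd_mul_right g1 g2).trans h2
        have h4 : g1 ∣ B ^ 2 * p * p := hg1.mul_left _
        have := dvd_sub this h4
        convert this using 1; ring
      have : IsRelPrime g1 (q ^ 2) := (hpq.of_dvd_left hg1).pow_right
      exact this.dvd_of_dvd_mul_right h3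
    · have h3 : g2 ∣ B ^ 2 * p ^ 2 := by
        have := (dvd_mul_left g2 g1).trans h2
        have h4 : g2 ∣ B * A * q * q := hg2.mul_left _
        have := dvd_sub this h4
        convert this using 1; ring
      have : IsRelPrime g2 (p ^ 2) := (hpq.symm.of_dvd_left hg2).pow_right
      exact this.dvd_of_dvd_mul_right h3
  have hd0 : d ≠ 0 := by
    rintro rfl
    rw [← hd] at hm
    apply mul_ne_zero hp0 hq0
    rw [hm]; ring
  refine ⟨g * u, ?_, algebraMap O K d / algebraMap O K q, ?_, ?_⟩
  · exact (Units.mul_right_dvd).2 hgN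
  · exact div_ne_zero (by simpa using hd0) hqK
  · have hmK : algebraMap O K p * algebraMap O K q =
        algebraMap O K g * (algebraMap O K d ^ 2 * algebraMap O K u) := by
      rw [← map_pow, ← map_mul, ← map_mul, ← map_mul, hd, hm]
    rw [← hx', map_mul]
    field_simp
    linear_combination hmK

lemma finiteIndex_of_map {G X : Type*} [AddCommGroup G] [Finite X] (H : AddSubgroup G) (f : G → X)
    (hf : ∀ P Q, f P = f Q → P - Q ∈ H) : H.FiniteIndex := by
  rw [AddSubgroup.finiteIndex_iff_finite_quotient]
  apply Finite.of_injective (fun q : G ⧸ H ↦ f q.out)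
  intro q q' h
  have := hf _ _ h
  rw [← QuotientAddGroup.eq_iff_sub_mem] at this
  simpa using this

lemma finiteIndex_phi (O : Type*) [CommRing O] [IsDomain O] [UniqueFactorizationMonoid O]
    [Finite Oˣ] [Algebra O K] [IsFractionRing O K] (ha : a ≠ 0) {i : K} (hi : i ^ 2 = -1) :
    (phi ha hi).range.FiniteIndex := by
  obtain ⟨N, hN, hcl⟩ := exists_class O ha
  have : Fintype Oˣ := Fintype.ofFinite _
  have : Fintype {e : O // e ∣ N} := UniqueFactorizationMonoid.fintypeSubtypeDvd N hN
  have key : ∀ P : (GC a).toAffine.Point, ∃ c : Option (Option {e : O // e ∣ N}),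
      (c = none → P = 0) ∧ (c = some none → ∃ y h, P = Point.some 0 y h) ∧
      (∀ e, c = some (some e) → ∃ x y h r, P = Point.some x y h ∧ r ≠ 0 ∧ x ≠ 0 ∧
        x = algebraMap O K e.1 * r ^ 2) := by
    intro P
    rcases P with _ | ⟨x, y, h⟩
    · refine ⟨none, fun _ => rfl, by simp, by simp⟩
    · by_cases hx : x = 0
      · subst hx
        exact ⟨some none, by simp, fun _ => ⟨y, h, rfl⟩, by simp⟩
      · obtain ⟨e, he, r, hr, hxr⟩ := hcl x y hx ((nonsing_iff ha _ _).1 h)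
        refine ⟨some (some ⟨e, he⟩), by simp, by simp, ?_⟩
        intro e' h'
        simp only [Option.some.injEq] at h'
        subst h'
        exact ⟨x, y, h, r, rfl, hr, hx, hxr⟩
  choose f h1 h2 h3 using key
  apply finiteIndex_of_map _ f
  intro P Q hPQ
  rcases hP : f P with _ | _ | e
  · rw [h1 P hP, h1 Q (hPQ ▸ hP), sub_zero]; exact zero_mem _
  · obtain ⟨y, h, rfl⟩ := h2 P hP
    obtain ⟨y', h', rfl⟩ := h2 Q (hPQ ▸ hP)
    have e := (nonsing_iff ha _ _).1 h
    have e' := (nonsing_iff ha _ _).1 h'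
    have hy : y = 0 := pow_eq_zero_iff (two_ne_zero) |>.1 (e.trans (by ring))
    have hy' : y' = 0 := pow_eq_zero_iff (two_ne_zero) |>.1 (e'.trans (by ring))
    subst hy; subst hy'
    rw [sub_self]; exact zero_mem _
  · obtain ⟨x, y, h, r, rfl, hr, hx, hxr⟩ := h3 P e hP
    obtain ⟨x', y', h', r', rfl, hr', hx', hxr'⟩ := h3 Q e (hPQ ▸ hP)
    apply sub_mem_phi ha hi h h' (r := algebraMap O K e.1 * r * r')
    · refine mul_ne_zero (mul_ne_zero ?_ hr) hr'
      intro h0; apply hx; rw [hxr, h0, zero_mul]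
    · rw [hxr, hxr']; ring

lemma finiteIndex_two (O : Type*) [CommRing O] [IsDomain O] [UniqueFactorizationMonoid O]
    [Finite Oˣ] [Algebra O K] [IsFractionRing O K] (ha : a ≠ 0) {i : K} (hi : i ^ 2 = -1) :
    (nsmulAddMonoidHom (α := (GC a).toAffine.Point) 2).range.FiniteIndex := by
  have hphi := finiteIndex_phi O ha hi
  have key : ∀ P : (GC a).toAffine.Point, ∃ Q,
      phi ha hi Q = P - (QuotientAddGroup.mk (s := (phi ha hi).range) P).out := by
    intro P
    have : P - (QuotientAddGroup.mk (s := (phi ha hi).range) P).out ∈ (phi ha hi).range := by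
      rw [← QuotientAddGroup.eq_iff_sub_mem]; simp
    exact this
  choose f hf using key
  apply finiteIndex_of_map _ (fun P ↦ (QuotientAddGroup.mk (s := (phi ha hi).range) P,
    QuotientAddGroup.mk (s := (phi ha hi).range) (f P)))
  intro P Q h
  simp only [Prod.mk.injEq] at h
  have e1 := hf P
  have e2 := hf Q
  rw [h.1] at e1
  have h3 := h.2
  rw [QuotientAddGroup.eq_iff_sub_mem] at h3
  obtain ⟨R, hR⟩ := h3
  refine ⟨J ha hi R, ?_⟩
  rw [nsmulAddMonoidHom_apply, ← phi_phi ha hi, hR, map_sub, e1, e2]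
  abel

end Descent

theorem QIi_sq : QIi ^ 2 = -1 := by
  apply Subtype.ext
  simp [QIi]

theorem QI_isIntegral : IsIntegral ℚ Complex.I := by
  refine ⟨Polynomial.X ^ 2 + 1, by monicity!, by simp⟩

theorem QI_numberField : NumberField QI where
  to_charZero := inferInstance
  to_finiteDimensional := IntermediateField.adjoin.finiteDimensional QI_isIntegral

/-- The embedding of the Gaussian integers in `ℚ(i)` as a ring homomorphism. -/
def gaussHom : GaussianInt →+* QI :=
  Zsqrtd.lift ⟨QIi, by rw [← pow_two, QIi_sq]; simp⟩

theorem gaussHom_apply (z : GaussianInt) : gaussHom z = (z.re : QI) + (z.im : QI) * QIi := rfl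

theorem gaussHom_injective : Function.Injective gaussHom := by
  rw [injective_iff_map_eq_zero]
  intro z hz
  rw [gaussHom_apply] at hz
  have h := congrArg (fun t : QI => (t : ℂ)) hz
  have h1 := congrArg Complex.re h
  have h2 := congrArg Complex.im h
  simp [QIi, -GaussianInt.intCast_re, -GaussianInt.intCast_im] at h1 h2
  exact Zsqrtd.ext h1 h2

theorem QI_repr (x : QI) : ∃ p q : ℚ, x = (p : QI) + (q : QI) * QIi := by
  obtain ⟨x, hx⟩ := x
  have key : ∃ p q : ℚ, x = (p : ℂ) + (q : ℂ) * Complex.I := by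
    rw [← IntermediateField.mem_toSubalgebra,
      IntermediateField.adjoin_simple_toSubalgebra_of_isAlgebraic QI_isIntegral.isAlgebraic] at hx
    induction hx using Algebra.adjoin_induction with
    | mem x hx =>
      rw [Set.mem_singleton_iff] at hx
      exact ⟨0, 1, by simp [hx]⟩
    | algebraMap r => exact ⟨r, 0, by simp⟩
    | add x y _ _ hx hy =>
      obtain ⟨p, q, rfl⟩ := hx
      obtain ⟨r, s, rfl⟩ := hy
      exact ⟨p + r, q + s, by push_cast; ring⟩
    | mul x y _ _ hx hy =>
      obtain ⟨p, q, rfl⟩ := hx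
      obtain ⟨r, s, rfl⟩ := hy
      refine ⟨p * r - q * s, p * s + q * r, ?_⟩
      push_cast
      linear_combination (q * s : ℂ) * Complex.I_sq
  obtain ⟨p, q, h⟩ := key
  refine ⟨p, q, Subtype.ext ?_⟩
  change x = _
  rw [h]
  simp [QIi]

theorem gauss_frac (x : QI) : ∃ (z : GaussianInt) (n : GaussianInt), n ≠ 0 ∧
    x * gaussHom n = gaussHom z := by
  obtain ⟨p, q, rfl⟩ := QI_repr x
  refine ⟨⟨p.num * q.den, q.num * p.den⟩, ((p.den * q.den : ℕ) : GaussianInt), ?_, ?_⟩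
  · exact Nat.cast_ne_zero.2 (Nat.mul_ne_zero p.den_nz q.den_nz)
  · rw [map_natCast, gaussHom_apply]
    have hp : (p : QI) * (p.den : QI) = (p.num : QI) := by
      exact_mod_cast congrArg (fun t : ℚ => (t : QI)) (Rat.mul_den_eq_num p)
    have hq : (q : QI) * (q.den : QI) = (q.num : QI) := by
      exact_mod_cast congrArg (fun t : ℚ => (t : QI)) (Rat.mul_den_eq_num q)
    push_cast
    linear_combination (q.den : QI) * hp + (p.den : QI) * QIi * hq

theorem gauss_isFractionRing : @IsFractionRing GaussianInt _ QI _ gaussHom.toAlgebra := by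
  letI : Algebra GaussianInt QI := gaussHom.toAlgebra
  have hinj : Function.Injective (algebraMap GaussianInt QI) := gaussHom_injective
  haveI : FaithfulSMul GaussianInt QI := (faithfulSMul_iff_algebraMap_injective _ _).2 hinj
  refine IsFractionRing.of_field GaussianInt QI ?_
  intro x
  obtain ⟨z, n, hn, h⟩ := gauss_frac x
  refine ⟨z, n, ?_⟩
  rw [eq_div_iff (by simpa using hinj.ne hn)]
  exact h

theorem gauss_finite_units : Finite GaussianIntˣ := by
  have hsub : ∀ u : GaussianIntˣ, (u : GaussianInt).re ∈ Set.Icc (-1 : ℤ) 1 ∧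
      (u : GaussianInt).im ∈ Set.Icc (-1 : ℤ) 1 := by
    intro u
    have h : (u : GaussianInt).norm = 1 :=
      (Zsqrtd.norm_eq_one_iff' (by norm_num) _).2 u.isUnit
    rw [Zsqrtd.norm_def] at h
    simp only [Set.mem_Icc]
    refine ⟨⟨?_, ?_⟩, ⟨?_, ?_⟩⟩ <;>
      nlinarith [mul_self_nonneg (u : GaussianInt).re, mul_self_nonneg (u : GaussianInt).im]
  refine Finite.of_injective (β := Set.Icc (-1 : ℤ) 1 × Set.Icc (-1 : ℤ) 1)
    (fun u => (⟨_, (hsub u).1⟩, ⟨_, (hsub u).2⟩)) ?_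
  intro u v h
  simp only [Prod.mk.injEq, Subtype.mk.injEq] at h
  exact Units.ext (Zsqrtd.ext h.1 h.2)

theorem QI_fg [DecidableEq QI] {a : QI} (ha : a ≠ 0) : AddGroup.FG (GC a).toAffine.Point := by
  haveI := QI_numberField
  letI : Algebra GaussianInt QI := gaussHom.toAlgebra
  haveI : IsFractionRing GaussianInt QI := gauss_isFractionRing
  haveI := gauss_finite_units
  exact fg_of_index ha (finiteIndex_two GaussianInt ha QIi_sq)

theorem even_rank {E : Type*} [AddCommGroup E] (hE : AddGroup.FG E) (j : E →+ E)
    (hj : ∀ P, j (j P) = -P) :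
    ∃ n : ℕ, Even n ∧ Module.rank ℚ (ℚ ⊗[ℤ] E) = n := by
  haveI : Module.Finite ℤ E := Module.Finite.iff_addGroup_fg.2 hE
  refine ⟨Module.finrank ℚ (ℚ ⊗[ℤ] E), ?_, (Module.finrank_eq_rank ℚ _).symm⟩
  set f : (ℚ ⊗[ℤ] E) →ₗ[ℚ] (ℚ ⊗[ℤ] E) := LinearMap.baseChange ℚ j.toIntLinearMap with hf
  have hff : f * f = (-1 : ℚ) • 1 := by
    apply LinearMap.ext
    intro x
    induction x using TensorProduct.induction_on with
    | zero => simp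
    | tmul r e => simp [hf, hj, TensorProduct.tmul_neg]
    | add x y hx hy => rw [map_add, map_add, hx, hy]
  have hdet := congrArg LinearMap.det hff
  rw [map_mul, LinearMap.det_smul, map_one, mul_one] at hdet
  by_contra hodd
  rw [Nat.not_even_iff_odd] at hodd
  rw [hodd.neg_one_pow] at hdet
  nlinarith [mul_self_nonneg (LinearMap.det f)]

end CMRank

/-- for nonzero `α ∈ ℚ(i)`, the rank of `E_α(ℚ(i))`, i.e. the dimension of the
`ℚ`-vector space `E_α(ℚ(i)) ⊗_ℤ ℚ`, is an even natural number. -/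
theorem stmt17 (α : QI) (hα : α ≠ 0) :
    ∃ n : ℕ, Even n ∧ Module.rank ℚ (ℚ ⊗[ℤ] (Ecurve α).toAffine.Point) = n := by
  classical
  exact CMRank.even_rank (CMRank.QI_fg hα) (CMRank.J hα CMRank.QIi_sq) (CMRank.J_J hα CMRank.QIi_sq)
end
end
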